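/- For all real x > 0, α > 0, and β > 0, ∫₀^{π/2} sin^{α−1}(v) · cos^{β−1}(v) · sin(x·tan v − (α+β)v + απ/2) dv = (π·x^β/Γ(β+1)) · φ(α+β, 1+β, −x). -/

import Mathlib

open MeasureTheory intervalIntegral
open scoped Nat

/-- Kummer's confluent hypergeometric series φ(α,β,x) = ∑ (α)ₙ/(β)ₙ · xⁿ/n!. -/
noncomputable def kummerPhi (α β x : ℝ) : ℝ :=
  ∑' n : ℕ, ((ascPochhammer ℝ n).eval α / (ascPochhammer ℝ n).eval β) * x ^ n / (n ! : ℝ)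


/-!
With principal powers, put `F z = z ^ (α - 1) * (1 + z) ^ (-(α + β))` on the right half-plane. The
theorem computes the Laplace inversion integral `∫ F (c + iω) * exp (x * (c + iω)) dω` in two ways.

* On the line `c = 2`, expand `F z = ∑ Ring.choose (-(α + β)) n * z ^ (-(β + n + 1))` binomially at
  infinity and invert termwise: each power contributes `2π * x ^ (β + n) / Γ (β + n + 1)`
  (`inverse_laplace_cpow`, Fourier inversion applied to the Laplace transform of `t ^ (β + n)`), and
  the sum is `2π * x ^ β / Γ (β + 1)` times the Kummer series (`integral_invKern_two`).
* Near the imaginary axis, `F` decays like `|ω| ^ (-(β + 1))` and has at worst the integrable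
  singularity `|ω| ^ (α - 1)` at the origin, uniformly in `c` (`norm_kern_le`). Cauchy's theorem on
  rectangles and dominated convergence therefore move the line to `c = 0`
  (`integral_invKern_axis`). There the values at `ω` and `-ω` are conjugate, so the integral is
  `∫ 2 * Re` over `ω > 0`, and `ω = tan v` turns `iω` and `1 + iω` into their polar forms
  `tan v * exp (iπ/2)` and `exp (iv) / cos v` (`invKern_tan`), which gives twice the sine integral.
-/

/-! ### Laplace inversion of powers -/

/-- The Laplace transform of `t ^ (a - 1)` on the whole right half-plane. Both sides are holomorphic
there and agree on the positive reals. -/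
lemma laplace_rpow {a : ℝ} (ha : 0 < a) {z : ℂ} (hz : 0 < z.re) :
    ∫ t in Set.Ioi (0 : ℝ), ((t ^ (a - 1) : ℝ) : ℂ) * Complex.exp (-z * t)
      = Real.Gamma a * z ^ (-a : ℂ) := by
  have hnorm : ∀ (w : ℂ) (b t : ℝ), 0 < t →
      ‖((t ^ b : ℝ) : ℂ) * Complex.exp (-w * t)‖ = t ^ b * Real.exp (-w.re * t) := by
    intro w b t ht
    rw [norm_mul, Complex.norm_real, Complex.norm_exp, Real.norm_of_nonneg (by positivity)]
    simp
  have hreal : ∀ (b r : ℝ), -1 < b → 0 < r →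
      IntegrableOn (fun t : ℝ => t ^ b * Real.exp (-r * t)) (Set.Ioi 0) := by
    intro b r hb hr
    simpa using integrableOn_rpow_mul_exp_neg_mul_rpow hb zero_lt_one hr
  have hmeas : ∀ (w : ℂ) (b : ℝ), AEStronglyMeasurable
      (fun t : ℝ => ((t ^ b : ℝ) : ℂ) * Complex.exp (-w * t)) (volume.restrict (Set.Ioi 0)) := by
    intro w b
    exact Measurable.aestronglyMeasurable (by fun_prop)
  have hderiv : ∀ w : ℂ, 0 < w.re → DifferentiableAt ℂ
      (fun w : ℂ => ∫ t in Set.Ioi (0 : ℝ), ((t ^ (a - 1) : ℝ) : ℂ) * Complex.exp (-w * t)) w := by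
    intro w hw
    have hε : 0 < w.re / 2 := by positivity
    refine (hasDerivAt_integral_of_dominated_loc_of_deriv_le (𝕜 := ℂ)
      (F' := fun v (t : ℝ) => ((t ^ (a - 1) : ℝ) : ℂ) * (Complex.exp (-v * t) * (-t)))
      (bound := fun t => t ^ a * Real.exp (-(w.re / 2) * t))
      (Metric.ball_mem_nhds w hε) (.of_forall fun v => hmeas v _) ?_
      (Measurable.aestronglyMeasurable (by fun_prop)) ?_ (hreal a _ (by linarith) hε)
      ?_).2.differentiableAt
    · refine (hreal (a - 1) w.re (by linarith) hw).mono' (hmeas w _) ?_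
      filter_upwards [ae_restrict_mem measurableSet_Ioi] with t ht
      rw [hnorm w _ t ht]
    · filter_upwards [ae_restrict_mem measurableSet_Ioi] with t ht v hv
      have ht' : (0 : ℝ) < t := ht
      have hvre : w.re / 2 ≤ v.re := by
        have h1 := Complex.abs_re_le_norm (v - w)
        rw [Metric.mem_ball, dist_eq_norm] at hv
        have h2 := (abs_le.1 h1).1
        rw [Complex.sub_re] at h2
        linarith
      rw [← mul_assoc, norm_mul, hnorm v _ t ht, norm_neg, Complex.norm_real,
        Real.norm_of_nonneg ht'.le, mul_right_comm, ← Real.rpow_add_one ht'.ne', sub_add_cancel]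
      gcongr
    · refine .of_forall fun t v _ => ?_
      have h1 : HasDerivAt (fun v : ℂ => -v * (t : ℂ)) (-(t : ℂ)) v := by
        simpa using ((hasDerivAt_id v).neg.mul_const (t : ℂ))
      exact h1.cexp.const_mul _
  have hopen : IsOpen {w : ℂ | 0 < w.re} := isOpen_lt continuous_const Complex.continuous_re
  have hA : AnalyticOnNhd ℂ
      (fun w : ℂ => ∫ t in Set.Ioi (0 : ℝ), ((t ^ (a - 1) : ℝ) : ℂ) * Complex.exp (-w * t))
      {w : ℂ | 0 < w.re} :=
    DifferentiableOn.analyticOnNhd (fun w hw => (hderiv w hw).differentiableWithinAt) hopen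
  have hB : AnalyticOnNhd ℂ (fun w : ℂ => Real.Gamma a * w ^ (-a : ℂ)) {w : ℂ | 0 < w.re} := by
    refine DifferentiableOn.analyticOnNhd (fun w hw => ?_) hopen
    have : w ∈ Complex.slitPlane := Or.inl hw
    exact (((differentiableAt_id).cpow_const this).const_mul _).differentiableWithinAt
  have hconn : IsPreconnected {w : ℂ | 0 < w.re} := (convex_halfSpace_re_gt 0).isPreconnected
  refine hA.eqOn_of_preconnected_of_frequently_eq hB hconn (z₀ := 1) (by simp) ?_ hz
  -- the positive reals accumulate at `1`
  have hfreq : ∃ᶠ r in nhdsWithin (1 : ℝ) {1}ᶜ, 0 < r := by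
    refine Filter.Eventually.frequently ?_
    exact nhdsWithin_le_nhds (lt_mem_nhds zero_lt_one)
  have htend : Filter.Tendsto (fun r : ℝ => (r : ℂ)) (nhdsWithin 1 {1}ᶜ) (nhdsWithin 1 {1}ᶜ) := by
    refine tendsto_nhdsWithin_iff.2 ⟨?_, ?_⟩
    · exact (Complex.continuous_ofReal.tendsto' 1 1 (by simp)).mono_left nhdsWithin_le_nhds
    · filter_upwards [self_mem_nhdsWithin] with r hr
      simpa using hr
  refine htend.frequently (hfreq.mono fun r hr => ?_)
  have h := Complex.integral_cpow_mul_exp_neg_mul_Ioi (a := a) (r := r) (by simpa) hr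
  rw [Complex.Gamma_ofReal] at h
  rw [Complex.cpow_neg, ← Complex.inv_cpow, ← one_div, mul_comm, ← h]
  · refine setIntegral_congr_fun measurableSet_Ioi fun t ht => ?_
    simp only [neg_mul]
    rw [Complex.ofReal_cpow (le_of_lt ht)]
    simp
  · rw [Complex.arg_ofReal_of_nonneg hr.le]
    exact Real.pi_pos.ne

lemma norm_sq_vert (c ω : ℝ) : ‖(c + ω * Complex.I : ℂ)‖ = Real.sqrt (c ^ 2 + ω ^ 2) :=
  Complex.norm_add_mul_I c ω

lemma norm_vert_rpow_le {c r : ℝ} (hc : 1 ≤ c) (hr : 0 ≤ r) (ω : ℝ) :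
    ‖(c + ω * Complex.I : ℂ)‖ ^ (-r) ≤ (1 + ω ^ 2) ^ (-r / 2) := by
  rw [norm_sq_vert, Real.sqrt_eq_rpow, ← Real.rpow_mul (by positivity)]
  rw [show (1 / 2 * -r) = -r / 2 by ring]
  refine Real.rpow_le_rpow_of_nonpos (by positivity) (by nlinarith) (by linarith)

lemma integrable_bracket {r : ℝ} (hr : 1 < r) :
    Integrable (fun ω : ℝ => (1 + ω ^ 2) ^ (-r / 2)) := by
  have := integrable_rpow_neg_one_add_norm_sq (E := ℝ) (μ := volume) (r := r) (by simpa)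
  simpa using this

lemma integrable_vert_cpow {c r : ℝ} (hc : 1 ≤ c) (hr : 1 < r) :
    Integrable (fun ω : ℝ => (c + ω * Complex.I : ℂ) ^ (-r : ℂ)) := by
  refine (integrable_bracket hr).mono' (Measurable.aestronglyMeasurable (by fun_prop))
    (.of_forall fun ω => ?_)
  have := Complex.norm_cpow_real (c + ω * Complex.I) (-r)
  push_cast at this
  rw [this]
  exact norm_vert_rpow_le hc (by linarith) ω

/-- The inverse Laplace transform of `z ^ (-(a + 1))`. -/
lemma inverse_laplace_cpow {a c x : ℝ} (ha : 0 < a) (hc : 1 ≤ c) (hx : 0 < x) :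
    ∫ ω : ℝ, (c + ω * Complex.I : ℂ) ^ (-(a + 1 : ℝ) : ℂ) * Complex.exp (x * (c + ω * Complex.I))
      = ((2 * Real.pi * x ^ a / Real.Gamma (a + 1) : ℝ) : ℂ) := by
  have hc0 : 0 < c := by linarith
  have hpi := Real.pi_pos
  have hΓ : 0 < Real.Gamma (a + 1) := Real.Gamma_pos_of_pos (by linarith)
  set f : ℝ → ℂ := fun t => (((max t 0) ^ a * Real.exp (-c * t) : ℝ) : ℂ) with hf
  have hfcont : Continuous f := by
    refine Complex.continuous_ofReal.comp (Continuous.mul ?_ (by fun_prop))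
    exact (continuous_id.max continuous_const).rpow_const fun _ => Or.inr ha.le
  have hfind : f = (Set.Ioi (0 : ℝ)).indicator
      (fun t : ℝ => ((t ^ a * Real.exp (-c * t) : ℝ) : ℂ)) := by
    ext t
    by_cases ht : 0 < t
    · rw [Set.indicator_of_mem (Set.mem_Ioi.2 ht), hf]
      simp only [max_eq_left ht.le]
    · rw [Set.indicator_of_notMem (by simpa using ht), hf]
      simp only [max_eq_right (not_lt.1 ht), Real.zero_rpow ha.ne', zero_mul, Complex.ofReal_zero]
  have hfint : Integrable f := by
    rw [hfind, integrable_indicator_iff measurableSet_Ioi]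
    have h : IntegrableOn (fun t : ℝ => t ^ a * Real.exp (-c * t)) (Set.Ioi 0) := by
      simpa using integrableOn_rpow_mul_exp_neg_mul_rpow (s := a) (p := 1) (b := c)
        (by linarith) zero_lt_one hc0
    exact h.ofReal
  have hFourier : ∀ ξ : ℝ, FourierTransform.fourier f ξ
      = Real.Gamma (a + 1) * (c + (2 * Real.pi * ξ : ℝ) * Complex.I : ℂ) ^ (-(a + 1 : ℝ) : ℂ) := by
    intro ξ
    rw [← laplace_rpow (by linarith) (by simpa using hc0), Real.fourier_real_eq_integral_exp_smul,
      ← MeasureTheory.integral_indicator measurableSet_Ioi]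
    refine integral_congr_ae (.of_forall fun t => ?_)
    simp only [hfind, Set.indicator_apply]
    split_ifs with ht
    · rw [add_sub_cancel_right, smul_eq_mul]
      push_cast
      rw [mul_left_comm, ← Complex.exp_add]
      congr 2
      ring
    · simp
  have hFint : Integrable (FourierTransform.fourier f) := by
    rw [funext hFourier]
    refine Integrable.const_mul ?_ _
    exact (integrable_vert_cpow hc (by linarith : 1 < a + 1)).comp_mul_left' (by positivity)
  have hinv := congrFun (hfcont.fourierInv_fourier_eq hfint hFint) x
  rw [Real.fourierInv_eq'] at hinv
  have hsub := Measure.integral_comp_mul_left (fun ω : ℝ =>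
    (c + ω * Complex.I : ℂ) ^ (-(a + 1 : ℝ) : ℂ) * Complex.exp (x * (c + ω * Complex.I)))
    (2 * Real.pi)
  have hkey : ∫ ξ : ℝ, Complex.exp (((2 * Real.pi * inner ℝ ξ x : ℝ) : ℂ) * Complex.I) •
        FourierTransform.fourier f ξ
      = (Real.Gamma (a + 1) * Real.exp (-c * x) : ℝ) * ∫ ξ : ℝ,
        (c + (2 * Real.pi * ξ : ℝ) * Complex.I : ℂ) ^ (-(a + 1 : ℝ) : ℂ)
          * Complex.exp (x * (c + (2 * Real.pi * ξ : ℝ) * Complex.I)) := by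
    rw [← MeasureTheory.integral_const_mul]
    refine integral_congr_ae (.of_forall fun ξ => ?_)
    simp only [hFourier, smul_eq_mul]
    have : Complex.exp (((2 * Real.pi * inner ℝ ξ x : ℝ) : ℂ) * Complex.I)
        = (Real.exp (-c * x) : ℂ)
          * Complex.exp (x * (c + (2 * Real.pi * ξ : ℝ) * Complex.I)) := by
      push_cast
      rw [← Complex.exp_add]
      congr 1
      simp
      ring
    rw [this]
    push_cast
    ring
  rw [hkey, hsub, hf] at hinv
  simp only [max_eq_left hx.le] at hinv
  have habs : |(2 * Real.pi)⁻¹| = (2 * Real.pi)⁻¹ := abs_of_pos (by positivity)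
  rw [habs, Complex.real_smul] at hinv
  set J := ∫ ω : ℝ, (c + ω * Complex.I : ℂ) ^ (-(a + 1 : ℝ) : ℂ)
    * Complex.exp (x * (c + ω * Complex.I))
  have hE : (Real.exp (-c * x) : ℂ) ≠ 0 := by
    exact_mod_cast (Real.exp_pos _).ne'
  have hΓ' : (Real.Gamma (a + 1) : ℂ) ≠ 0 := by exact_mod_cast hΓ.ne'
  have hpi' : (Real.pi : ℂ) ≠ 0 := by exact_mod_cast hpi.ne'
  rw [Complex.ofReal_mul, Complex.ofReal_mul, Complex.ofReal_inv] at hinv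
  push_cast at hinv hE ⊢
  field_simp at hinv ⊢
  linear_combination hinv

/-! ### The kernel and the shift of the contour -/

/-- The Laplace-side kernel `z ^ (α - 1) * (1 + z) ^ (-(α + β))`, with principal powers. -/
noncomputable def kern (α β : ℝ) (z : ℂ) : ℂ :=
  z ^ ((α - 1 : ℝ) : ℂ) * (1 + z) ^ ((-(α + β) : ℝ) : ℂ)

/-- An integrable majorant of `kern` on all vertical lines in the closed right half-plane at once. -/
noncomputable def kernBound (α β : ℝ) (ω : ℝ) : ℝ :=
  (Set.Icc (-1 : ℝ) 1).indicator (fun ω => |ω| ^ (α - 1)) ω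
    + 2 ^ |1 - α| * (1 + ω ^ 2) ^ (-(β + 1) / 2)

lemma kernBound_integrable {α β : ℝ} (hα : 0 < α) (hβ : 0 < β) :
    Integrable (kernBound α β) := by
  refine Integrable.add ?_ ((integrable_bracket (by linarith)).const_mul _)
  rw [integrable_indicator_iff measurableSet_Icc]
  have h1 : IntervalIntegrable (fun ω : ℝ => |ω| ^ (α - 1)) volume 0 1 := by
    refine (intervalIntegrable_rpow' (a := 0) (b := 1) (r := α - 1) (by linarith)).congr ?_
    intro ω hω
    rw [Set.uIoc_of_le zero_le_one] at hω
    simp only [abs_of_pos hω.1]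
  have h2 : IntervalIntegrable (fun ω : ℝ => |ω| ^ (α - 1)) volume (-1) 0 := by
    have := ((IntervalIntegrable.iff_comp_neg (by simp)).1 h1).symm
    simpa using this
  rw [← intervalIntegrable_iff_integrableOn_Icc_of_le (by norm_num)]
  exact h2.trans h1

lemma norm_kern_le {α β : ℝ} (hα : 0 < α) (hβ : 0 < β) {c ω : ℝ} (hc : 0 ≤ c) (hω : ω ≠ 0) :
    ‖kern α β (c + ω * Complex.I)‖ ≤ kernBound α β ω := by
  have h1z : (1 + (c + ω * Complex.I) : ℂ) = ((1 + c : ℝ) : ℂ) + ω * Complex.I := by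
    push_cast; ring
  have hm : ‖(1 + (c + ω * Complex.I) : ℂ)‖ ^ (-(β + 1)) ≤ (1 + ω ^ 2) ^ (-(β + 1) / 2) := by
    rw [h1z]
    exact norm_vert_rpow_le (by linarith) (by linarith) ω
  have hre := Complex.abs_re_le_norm (1 + (c + ω * Complex.I) : ℂ)
  have hnm : ‖(c + ω * Complex.I : ℂ)‖ ≤ ‖(1 + (c + ω * Complex.I) : ℂ)‖ := by
    rw [h1z, norm_sq_vert, norm_sq_vert]
    apply Real.sqrt_le_sqrt
    nlinarith
  have hmn : ‖(1 + (c + ω * Complex.I) : ℂ)‖ ≤ 1 + ‖(c + ω * Complex.I : ℂ)‖ := by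
    simpa using norm_add_le (1 : ℂ) (c + ω * Complex.I)
  have hωn := Complex.abs_im_le_norm (c + ω * Complex.I : ℂ)
  simp at hωn hre
  rw [abs_of_nonneg (by linarith)] at hre
  unfold kern kernBound
  rw [norm_mul, Complex.norm_cpow_real, Complex.norm_cpow_real]
  generalize ‖(c + ω * Complex.I : ℂ)‖ = n at *
  generalize ‖(1 + (c + ω * Complex.I) : ℂ)‖ = m at *
  have hω0 : 0 < |ω| := abs_pos.2 hω
  have hn0 : 0 < n := by linarith
  have hm1 : 1 ≤ m := by linarith
  have hm0 : 0 < m := by linarith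
  have h2 : (1 : ℝ) ≤ 2 ^ |1 - α| := Real.one_le_rpow (by norm_num) (abs_nonneg _)
  have hind : 0 ≤ (Set.Icc (-1 : ℝ) 1).indicator (fun ω => |ω| ^ (α - 1)) ω :=
    Set.indicator_nonneg (fun _ _ => by positivity) _
  have hbr : 0 ≤ (1 + ω ^ 2) ^ (-(β + 1) / 2) := by positivity
  have hsplit : m ^ (α - 1) * m ^ (-(α + β)) = m ^ (-(β + 1)) := by
    rw [← Real.rpow_add hm0]; congr 1; ring
  rcases le_or_gt 1 α with h | h
  · calc n ^ (α - 1) * m ^ (-(α + β)) ≤ m ^ (α - 1) * m ^ (-(α + β)) := by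
          gcongr
      _ = m ^ (-(β + 1)) := hsplit
      _ ≤ (1 + ω ^ 2) ^ (-(β + 1) / 2) := hm
      _ ≤ _ := by nlinarith
  · by_cases hω1 : |ω| ≤ 1
    · rw [Set.indicator_of_mem (Set.mem_Icc.2 (abs_le.1 hω1))]
      have e1 : n ^ (α - 1) ≤ |ω| ^ (α - 1) :=
        Real.rpow_le_rpow_of_nonpos hω0 hωn (by linarith)
      have e2 : m ^ (-(α + β)) ≤ 1 := Real.rpow_le_one_of_one_le_of_nonpos hm1 (by linarith)
      have e3 : n ^ (α - 1) * m ^ (-(α + β)) ≤ |ω| ^ (α - 1) * 1 := by gcongr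
      nlinarith
    · -- here `1 < n`, so `m ≤ 1 + n ≤ 2 n` and the negative power of `n` is controlled by that of `m`
      have e1 : n ^ (α - 1) ≤ (m / 2) ^ (α - 1) :=
        Real.rpow_le_rpow_of_nonpos (by positivity) (by linarith) (by linarith)
      have e2 : (m / 2) ^ (α - 1) = 2 ^ |1 - α| * m ^ (α - 1) := by
        rw [Real.div_rpow hm0.le (by norm_num), abs_of_pos (by linarith), div_eq_mul_inv,
          ← Real.rpow_neg (by norm_num), neg_sub, mul_comm]
      calc n ^ (α - 1) * m ^ (-(α + β)) ≤ (m / 2) ^ (α - 1) * m ^ (-(α + β)) := by gcongr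
        _ = 2 ^ |1 - α| * m ^ (-(β + 1)) := by rw [e2, mul_assoc, hsplit]
        _ ≤ 2 ^ |1 - α| * (1 + ω ^ 2) ^ (-(β + 1) / 2) := by gcongr
        _ ≤ _ := by linarith

/-- The integrand of the inversion integral. -/
noncomputable def invKern (α β x : ℝ) (z : ℂ) : ℂ := kern α β z * Complex.exp (x * z)

lemma norm_invKern_le {α β x : ℝ} (hα : 0 < α) (hβ : 0 < β) {c ω : ℝ} (hc : 0 ≤ c)
    (hω : ω ≠ 0) :
    ‖invKern α β x (c + ω * Complex.I)‖ ≤ Real.exp (x * c) * kernBound α β ω := by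
  rw [invKern, norm_mul, Complex.norm_exp, mul_comm]
  have : ((x : ℂ) * (c + ω * Complex.I)).re = x * c := by simp
  rw [this]
  gcongr
  exact norm_kern_le hα hβ hc hω

lemma measurable_invKern (α β x c : ℝ) :
    Measurable (fun ω : ℝ => invKern α β x (c + ω * Complex.I)) := by
  unfold invKern kern
  fun_prop

lemma ae_ne_zero : ∀ᵐ ω : ℝ, ω ≠ 0 := by
  simp [ae_iff]

lemma integrable_invKern {α β x : ℝ} (hα : 0 < α) (hβ : 0 < β) {c : ℝ} (hc : 0 ≤ c) :
    Integrable (fun ω : ℝ => invKern α β x (c + ω * Complex.I)) := by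
  refine ((kernBound_integrable hα hβ).const_mul (Real.exp (x * c))).mono'
    (measurable_invKern α β x c).aestronglyMeasurable ?_
  filter_upwards [ae_ne_zero] with ω hω
  exact norm_invKern_le hα hβ hc hω

lemma differentiableAt_invKern {α β x : ℝ} {z : ℂ} (h1 : z ∈ Complex.slitPlane)
    (h2 : 1 + z ∈ Complex.slitPlane) : DifferentiableAt ℂ (invKern α β x) z := by
  unfold invKern kern
  exact ((differentiableAt_id.cpow_const h1).mul
    ((differentiableAt_id.const_add 1).cpow_const h2)).mul (by fun_prop)

/-- The inversion integral does not depend on the vertical line, by Cauchy's theorem on rectangles. -/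
lemma integral_invKern_eq {α β x : ℝ} (hα : 0 < α) (hβ : 0 < β) (hx : 0 < x) {c d : ℝ}
    (hc : 0 < c) (hcd : c ≤ d) :
    ∫ ω : ℝ, invKern α β x (c + ω * Complex.I) = ∫ ω : ℝ, invKern α β x (d + ω * Complex.I) := by
  set f := invKern α β x with hf
  have hhor : ∀ s : ℝ, |s| = 1 → Filter.Tendsto
      (fun T : ℝ => ∫ y in c..d, f (y + (s * T : ℝ) * Complex.I)) Filter.atTop (nhds 0) := by
    intro s hs
    have hdec : Filter.Tendsto (fun T : ℝ => (Real.exp (x * d) *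
        (2 ^ |1 - α| * (1 + T ^ 2) ^ (-(β + 1) / 2))) * |d - c|) Filter.atTop (nhds 0) := by
      have h1 : Filter.Tendsto (fun T : ℝ => 1 + T ^ 2) Filter.atTop Filter.atTop :=
        Filter.tendsto_atTop_add_const_left _ _ (Filter.tendsto_pow_atTop (by norm_num))
      have h2 := (tendsto_rpow_neg_atTop (y := (β + 1) / 2) (by linarith)).comp h1
      have h3 := ((h2.const_mul (2 ^ |1 - α|)).const_mul (Real.exp (x * d))).mul_const |d - c|
      simp only [Function.comp_def, mul_zero, zero_mul, ← neg_div] at h3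
      exact h3
    refine squeeze_zero_norm' ?_ hdec
    filter_upwards [Filter.eventually_gt_atTop 1] with T hT
    refine norm_integral_le_of_norm_le_const fun y hy => ?_
    rw [Set.uIoc_of_le hcd] at hy
    have hsT : |s * T| = T := by rw [abs_mul, hs, one_mul, abs_of_pos (by linarith)]
    have hne : s * T ≠ 0 := by
      rw [← abs_pos, hsT]; linarith
    have hsq : (s * T) ^ 2 = T ^ 2 := by rw [← sq_abs, hsT]
    refine (norm_invKern_le hα hβ (by linarith [hy.1]) hne).trans ?_
    have : kernBound α β (s * T) = 2 ^ |1 - α| * (1 + T ^ 2) ^ (-(β + 1) / 2) := by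
      rw [kernBound, Set.indicator_of_notMem, hsq, zero_add]
      rw [Set.mem_Icc, ← abs_le, hsT]
      linarith
    rw [this]
    gcongr
    exact hy.2
  have hver : ∀ e : ℝ, 0 < e → Filter.Tendsto (fun T : ℝ => ∫ y in (-T)..T, f (e + y * Complex.I))
      Filter.atTop (nhds (∫ ω : ℝ, f (e + ω * Complex.I))) := fun e he =>
    intervalIntegral_tendsto_integral (integrable_invKern hα hβ he.le)
      Filter.tendsto_neg_atTop_atBot Filter.tendsto_id
  have hrect : ∀ T : ℝ, ((((∫ y in c..d, f (y + (-1 * T : ℝ) * Complex.I))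
      - ∫ y in c..d, f (y + (1 * T : ℝ) * Complex.I))
      + Complex.I • ∫ y in (-T)..T, f (d + y * Complex.I))
      - Complex.I • ∫ y in (-T)..T, f (c + y * Complex.I)) = 0 := by
    intro T
    have := Complex.integral_boundary_rect_eq_zero_of_differentiableOn f
      (c + (-T : ℝ) * Complex.I) (d + T * Complex.I) (fun z hz => ?_)
    · simpa using this
    · rw [Complex.mem_reProdIm] at hz
      have hre := hz.1
      simp only [Complex.add_re, Complex.ofReal_re, Complex.re_ofReal_mul, Complex.I_re, mul_zero,
        add_zero, Set.uIcc_of_le hcd, Set.mem_Icc] at hre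
      exact (differentiableAt_invKern (Or.inl (by linarith))
        (Or.inl (by simp; linarith))).differentiableWithinAt
  have hlim := ((((hhor (-1) (by simp)).sub (hhor 1 (by simp))).add
    ((hver d (by linarith)).const_smul Complex.I)).sub ((hver c hc).const_smul Complex.I))
  have h0 := tendsto_nhds_unique (hlim.congr hrect) tendsto_const_nhds
  simp only [sub_self, zero_add, smul_eq_mul] at h0
  rw [← mul_sub, mul_eq_zero, sub_eq_zero] at h0
  exact (h0.resolve_left Complex.I_ne_zero).symm

/-- The line of integration may be pushed onto the imaginary axis. -/
lemma integral_invKern_axis {α β x : ℝ} (hα : 0 < α) (hβ : 0 < β) (hx : 0 < x) {d : ℝ}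
    (hd : 1 ≤ d) :
    ∫ ω : ℝ, invKern α β x ((0 : ℝ) + ω * Complex.I)
      = ∫ ω : ℝ, invKern α β x (d + ω * Complex.I) := by
  have hev : ∀ᶠ c in nhdsWithin (0 : ℝ) (Set.Ioi 0), c ∈ Set.Ioo (0 : ℝ) 1 :=
    Ioo_mem_nhdsGT zero_lt_one
  have hlim : Filter.Tendsto (fun c : ℝ => ∫ ω : ℝ, invKern α β x (c + ω * Complex.I))
      (nhdsWithin 0 (Set.Ioi 0)) (nhds (∫ ω : ℝ, invKern α β x ((0 : ℝ) + ω * Complex.I))) := by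
    refine tendsto_integral_filter_of_dominated_convergence
      (fun ω => Real.exp x * kernBound α β ω)
      (.of_forall fun c => (measurable_invKern α β x c).aestronglyMeasurable) ?_
      ((kernBound_integrable hα hβ).const_mul _) ?_
    · filter_upwards [hev] with c hc
      filter_upwards [ae_ne_zero] with ω hω
      have hb := norm_invKern_le (x := x) hα hβ hc.1.le hω
      have hk : 0 ≤ kernBound α β ω := (norm_nonneg _).trans (norm_kern_le hα hβ hc.1.le hω)
      refine hb.trans ?_
      gcongr
      nlinarith [hc.2]
    · filter_upwards [ae_ne_zero] with ω hω
      have hcont : ContinuousAt (invKern α β x) (((0 : ℝ) : ℂ) + ω * Complex.I) :=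
        (differentiableAt_invKern (Or.inr (by simpa using hω)) (Or.inl (by simp))).continuousAt
      have hline : ContinuousAt (fun c : ℝ => (c + ω * Complex.I : ℂ)) 0 := by fun_prop
      exact (hcont.comp (f := fun c : ℝ => (c + ω * Complex.I : ℂ)) (x := (0 : ℝ))
        hline).tendsto.mono_left nhdsWithin_le_nhds
  refine tendsto_nhds_unique hlim (tendsto_const_nhds.congr' ?_)
  filter_upwards [hev] with c hc
  exact (integral_invKern_eq hα hβ hx hc.1 (by linarith [hc.2])).symm

/-! ### The binomial expansion at infinity and the Kummer series -/

lemma abs_arg_lt {z : ℂ} (hz : 0 < z.re) : |z.arg| < Real.pi / 2 :=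
  Complex.abs_arg_lt_pi_div_two_iff.2 (Or.inl hz)

lemma ne_zero_of_re_pos {z : ℂ} (hz : 0 < z.re) : z ≠ 0 := by
  rintro rfl
  simp at hz

lemma inv_re_pos {z : ℂ} (hz : 0 < z.re) : 0 < (z⁻¹).re := by
  rw [Complex.inv_re]
  exact div_pos hz (Complex.normSq_pos.2 (ne_zero_of_re_pos hz))

/-- Factoring out the leading power of `z` at infinity. -/
lemma kern_eq {α β : ℝ} {z : ℂ} (hz : 0 < z.re) :
    kern α β z = z ^ (-(β + 1 : ℝ) : ℂ) * (1 + z⁻¹) ^ (-(α + β : ℝ) : ℂ) := by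
  have hz0 : z ≠ 0 := ne_zero_of_re_pos hz
  have hw : 0 < (1 + z⁻¹).re := by
    have := inv_re_pos hz
    rw [Complex.add_re, Complex.one_re]
    linarith
  have hw0 := ne_zero_of_re_pos hw
  have hfac : 1 + z = z * (1 + z⁻¹) := by
    field_simp
    ring
  have h1 := abs_lt.1 (abs_arg_lt hz)
  have h2 := abs_lt.1 (abs_arg_lt hw)
  have hlog : Complex.log (1 + z) = Complex.log z + Complex.log (1 + z⁻¹) := by
    rw [hfac]
    exact Complex.log_mul hz0 hw0 ⟨by linarith [h1.1, h2.1], by linarith [h1.2, h2.2]⟩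
  have hz1 : 1 + z ≠ 0 := by rw [hfac]; exact mul_ne_zero hz0 hw0
  rw [kern, Complex.cpow_def_of_ne_zero hz0, Complex.cpow_def_of_ne_zero hz1,
    Complex.cpow_def_of_ne_zero hz0, Complex.cpow_def_of_ne_zero hw0, hlog, ← Complex.exp_add,
    ← Complex.exp_add]
  congr 1
  push_cast
  ring

lemma kern_hasSum {α β : ℝ} {z : ℂ} (hz : 1 < z.re) :
    HasSum (fun n : ℕ => Ring.choose (-(α + β : ℝ) : ℂ) n * z ^ (-((β + n : ℝ) + 1 : ℝ) : ℂ))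
      (kern α β z) := by
  have hz0 : z ≠ 0 := ne_zero_of_re_pos (by linarith)
  have hzn : 1 < ‖z‖ := hz.trans_le (Complex.re_le_norm z)
  have hmem : z⁻¹ ∈ Metric.eball (0 : ℂ) 1 := by
    rw [← ENNReal.ofReal_one, Metric.eball_ofReal, mem_ball_zero_iff, norm_inv]
    exact inv_lt_one_of_one_lt₀ hzn
  have h := (Complex.one_add_cpow_hasFPowerSeriesOnBall_zero
    (a := (-(α + β : ℝ) : ℂ))).hasSum hmem
  rw [zero_add] at h
  rw [kern_eq (by linarith)]
  have e : (fun n : ℕ => Ring.choose (-(α + β : ℝ) : ℂ) n * z ^ (-((β + n : ℝ) + 1 : ℝ) : ℂ))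
      = fun n => z ^ (-(β + 1 : ℝ) : ℂ) *
        (binomialSeries ℂ (-(α + β : ℝ) : ℂ) n fun _ => z⁻¹) := by
    funext n
    have hexp : (-((β + n : ℝ) + 1 : ℝ) : ℂ) = (-(β + 1 : ℝ) : ℂ) - n := by
      push_cast
      ring
    rw [hexp, Complex.cpow_sub _ _ hz0, Complex.cpow_natCast]
    simp only [binomialSeries_apply, List.ofFn_const, List.prod_replicate, smul_eq_mul, inv_pow]
    ring
  rw [e]
  exact h.mul_left _

lemma summable_choose (a : ℂ) : Summable fun n : ℕ => ‖Ring.choose a n‖ * (1 / 2 : ℝ) ^ n := by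
  have h := (binomialSeries ℂ a).summable_norm_mul_pow (r := 1 / 2)
    (lt_of_lt_of_le (by
      rw [← ENNReal.coe_one, ENNReal.coe_lt_coe]
      norm_num) binomialSeries_radius_ge_one)
  simpa [binomialSeries, FormalMultilinearSeries.ofScalars_norm] using h

/-- The binomial coefficient of `-s` in terms of the rising factorial of `s`. -/
lemma choose_neg_eq (s : ℝ) (n : ℕ) :
    Ring.choose (-s : ℂ) n = (((-1) ^ n * (ascPochhammer ℝ n).eval s / n ! : ℝ) : ℂ) := by
  have h : ∀ n : ℕ, (descPochhammer ℤ n).smeval (-s) = (-1) ^ n * (ascPochhammer ℝ n).eval s := by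
    intro n
    induction n with
    | zero => simp
    | succ n ih =>
      rw [descPochhammer_succ_right, Polynomial.smeval_mul, ih, ascPochhammer_succ_eval]
      simp [Polynomial.smeval_natCast]
      ring
  rw [← Complex.ofReal_neg, ← Complex.ofReal_choose, Ring.choose_eq_smul, h, smul_eq_mul]
  congr 1
  ring

lemma Gamma_add_nat (b : ℝ) (hb : 0 < b) (n : ℕ) :
    Real.Gamma (b + n) = Real.Gamma b * (ascPochhammer ℝ n).eval b := by
  induction n with
  | zero => simp
  | succ n ih =>
    rw [ascPochhammer_succ_eval, ← mul_assoc, ← ih, Nat.cast_succ, ← add_assoc,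
      Real.Gamma_add_one (by positivity), mul_comm]

/-- Termwise inversion of the binomial expansion on the line of real part `2`. -/
lemma integral_invKern_two {α β x : ℝ} (hβ : 0 < β) (hx : 0 < x) :
    ∫ ω : ℝ, invKern α β x ((2 : ℝ) + ω * Complex.I)
      = ((2 * Real.pi * x ^ β / Real.Gamma (β + 1) * kummerPhi (α + β) (1 + β) (-x) : ℝ) : ℂ) := by
  set F : ℕ → ℝ → ℂ := fun n ω => Ring.choose (-(α + β : ℝ) : ℂ) n *
    (((2 : ℝ) + ω * Complex.I : ℂ) ^ (-((β + n : ℝ) + 1 : ℝ) : ℂ)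
      * Complex.exp (x * ((2 : ℝ) + ω * Complex.I))) with hF
  have hnormexp : ∀ ω : ℝ, ‖Complex.exp (x * ((2 : ℝ) + ω * Complex.I))‖ = Real.exp (x * 2) := by
    intro ω
    rw [Complex.norm_exp]
    simp
  have hnorm : ∀ n ω, ‖F n ω‖ ≤ ‖Ring.choose (-(α + β : ℝ) : ℂ) n‖ * (1 / 2) ^ n *
      (Real.exp (x * 2) * (1 + ω ^ 2) ^ (-(β + 1) / 2)) := by
    intro n ω
    have hN : 2 ≤ ‖((2 : ℝ) + ω * Complex.I : ℂ)‖ := by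
      have := Complex.re_le_norm ((2 : ℝ) + ω * Complex.I : ℂ)
      simpa using this
    have h1 : ‖((2 : ℝ) + ω * Complex.I : ℂ)‖ ^ (-(β + 1)) ≤ (1 + ω ^ 2) ^ (-(β + 1) / 2) :=
      norm_vert_rpow_le one_le_two (by linarith) ω
    have h2 : ‖((2 : ℝ) + ω * Complex.I : ℂ)‖ ^ (-(n : ℝ)) ≤ (1 / 2) ^ n := by
      rw [Real.rpow_neg (norm_nonneg _), Real.rpow_natCast, one_div, inv_pow]
      gcongr
    rw [hF]
    simp only
    rw [norm_mul, norm_mul, hnormexp, ← Complex.ofReal_neg (β + n + 1), Complex.norm_cpow_real,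
      show -((β + n : ℝ) + 1) = -(n : ℝ) + -(β + 1) by ring, Real.rpow_add (by linarith)]
    calc _ ≤ ‖Ring.choose (-(α + β : ℝ) : ℂ) n‖ *
          ((1 / 2) ^ n * (1 + ω ^ 2) ^ (-(β + 1) / 2) * Real.exp (x * 2)) := by gcongr
      _ = _ := by ring
  have hbint : Integrable (fun ω : ℝ => Real.exp (x * 2) * (1 + ω ^ 2) ^ (-(β + 1) / 2)) :=
    (integrable_bracket (by linarith)).const_mul _
  have hFint : ∀ n, Integrable (F n) := fun n =>
    (hbint.const_mul _).mono' (Measurable.aestronglyMeasurable (by fun_prop))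
      (.of_forall (hnorm n))
  have hsum : Summable fun n => ∫ ω, ‖F n ω‖ := by
    refine Summable.of_nonneg_of_le (fun n => integral_nonneg fun ω => norm_nonneg _) (fun n => ?_)
      ((summable_choose (-(α + β : ℝ) : ℂ)).mul_right
        (∫ ω : ℝ, Real.exp (x * 2) * (1 + ω ^ 2) ^ (-(β + 1) / 2)))
    rw [← MeasureTheory.integral_const_mul]
    exact integral_mono (hFint n).norm (hbint.const_mul _) (hnorm n)
  have hterm : ∀ n, ∫ ω, F n ω = ((2 * Real.pi * x ^ β / Real.Gamma (β + 1) *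
      ((ascPochhammer ℝ n).eval (α + β) / (ascPochhammer ℝ n).eval (1 + β) * (-x) ^ n / n !) : ℝ)
        : ℂ) := by
    intro n
    rw [hF]
    simp only
    rw [MeasureTheory.integral_const_mul,
      inverse_laplace_cpow (by positivity) one_le_two hx, choose_neg_eq, ← Complex.ofReal_mul]
    congr 1
    rw [show β + n + 1 = (1 + β) + n by ring, Gamma_add_nat _ (by linarith),
      Real.rpow_add_natCast hx.ne', neg_pow x, add_comm β 1]
    have h1 := Real.Gamma_pos_of_pos (show 0 < 1 + β by linarith)
    have h2 := ascPochhammer_pos n (1 + β) (by linarith)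
    field_simp
  have hpt : ∀ ω : ℝ, ∑' n, F n ω = invKern α β x ((2 : ℝ) + ω * Complex.I) := by
    intro ω
    have h := (kern_hasSum (α := α) (β := β) (z := (2 : ℝ) + ω * Complex.I) (by simp)).mul_right
      (Complex.exp (x * ((2 : ℝ) + ω * Complex.I)))
    rw [invKern, ← h.tsum_eq]
    simp only [hF, mul_assoc]
  have h := (hasSum_integral_of_summable_integral_norm hFint hsum).tsum_eq
  simp only [hpt, hterm] at h
  rw [← h, ← Complex.ofReal_tsum, tsum_mul_left]
  rfl

/-! ### The imaginary axis and the substitution `ω = tan v` -/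

/-- The inversion integrand on the imaginary axis, in the angle `v = arctan ω`. -/
lemma invKern_tan {α β x v : ℝ} (hv : v ∈ Set.Ioo 0 (Real.pi / 2)) :
    invKern α β x ((0 : ℝ) + Real.tan v * Complex.I)
      = ((Real.sin v ^ (α - 1) * Real.cos v ^ (β + 1) : ℝ) : ℂ) * Complex.exp
          (((x * Real.tan v - (α + β) * v + α * Real.pi / 2 - Real.pi / 2 : ℝ) : ℂ)
            * Complex.I) := by
  have hs : 0 < Real.sin v := Real.sin_pos_of_pos_of_lt_pi hv.1 (by linarith [hv.2, Real.pi_pos])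
  have hc : 0 < Real.cos v := Real.cos_pos_of_mem_Ioo ⟨by linarith [hv.1, Real.pi_pos], hv.2⟩
  have ht : 0 < Real.tan v := Real.tan_pos_of_pos_of_lt_pi_div_two hv.1 hv.2
  have hlt : Real.log (Real.tan v) = Real.log (Real.sin v) - Real.log (Real.cos v) := by
    rw [Real.tan_eq_sin_div_cos, Real.log_div hs.ne' hc.ne']
  have hlog1 : Complex.log (Real.tan v * Complex.I)
      = ((Real.log (Real.sin v) - Real.log (Real.cos v) : ℝ) : ℂ) + Real.pi / 2 * Complex.I := by
    rw [Complex.log_ofReal_mul ht Complex.I_ne_zero, Complex.log_I, hlt]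
  have hpolar : (1 + Real.tan v * Complex.I : ℂ)
      = (((Real.cos v)⁻¹ : ℝ) : ℂ) * Complex.exp (v * Complex.I) := by
    have hc' : (Real.cos v : ℂ) ≠ 0 := by exact_mod_cast hc.ne'
    rw [Complex.exp_mul_I, ← Complex.ofReal_cos, ← Complex.ofReal_sin, Real.tan_eq_sin_div_cos]
    push_cast at hc' ⊢
    field_simp
  have hlog2 : Complex.log (1 + Real.tan v * Complex.I)
      = ((-Real.log (Real.cos v) : ℝ) : ℂ) + v * Complex.I := by
    rw [hpolar, Complex.log_ofReal_mul (by positivity) (Complex.exp_ne_zero _), Real.log_inv,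
      Complex.log_exp]
    · simp; linarith [hv.1, Real.pi_pos]
    · simp; linarith [hv.2, Real.pi_pos]
  have hn1 : (Real.tan v * Complex.I : ℂ) ≠ 0 :=
    mul_ne_zero (by exact_mod_cast ht.ne') Complex.I_ne_zero
  have hn2 : (1 + Real.tan v * Complex.I : ℂ) ≠ 0 := ne_zero_of_re_pos (by simp)
  rw [Complex.ofReal_zero, zero_add, invKern, kern, Complex.cpow_def_of_ne_zero hn1,
    Complex.cpow_def_of_ne_zero hn2, hlog1, hlog2, Real.rpow_def_of_pos hs,
    Real.rpow_def_of_pos hc, ← Real.exp_add, Complex.ofReal_exp, ← Complex.exp_add,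
    ← Complex.exp_add, ← Complex.exp_add]
  congr 1
  push_cast
  ring_nf

lemma invKern_conj {α β x ω : ℝ} (hω : ω ≠ 0) :
    invKern α β x ((0 : ℝ) + ((-ω : ℝ) : ℂ) * Complex.I)
      = (starRingEnd ℂ) (invKern α β x ((0 : ℝ) + ω * Complex.I)) := by
  have hz : (((0 : ℝ) : ℂ) + ((-ω : ℝ) : ℂ) * Complex.I)
      = (starRingEnd ℂ) ((0 : ℝ) + ω * Complex.I) := by
    simp
  have key : ∀ (z : ℂ) (r : ℝ), z ∈ Complex.slitPlane →
      (starRingEnd ℂ) z ^ (r : ℂ) = (starRingEnd ℂ) (z ^ (r : ℂ)) := by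
    intro z r h
    rw [Complex.conj_cpow _ _ (Complex.mem_slitPlane_iff_arg.1 h).1, Complex.conj_ofReal]
  have h1 : (((0 : ℝ) : ℂ) + ω * Complex.I) ∈ Complex.slitPlane := Or.inr (by simpa using hω)
  have h2 : 1 + (((0 : ℝ) : ℂ) + ω * Complex.I) ∈ Complex.slitPlane := Or.inl (by simp)
  rw [hz, invKern, kern, key _ _ h1, ← map_one (starRingEnd ℂ), ← map_add, key _ _ (by simpa using h2),
    invKern, kern, map_mul, map_mul, ← Complex.exp_conj, map_mul, Complex.conj_ofReal]

/-- Folding the imaginary axis onto its upper half. -/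
lemma integral_invKern_fold {α β x : ℝ} (hα : 0 < α) (hβ : 0 < β) :
    ∫ ω : ℝ, invKern α β x ((0 : ℝ) + ω * Complex.I)
      = ((∫ ω in Set.Ioi (0 : ℝ), 2 * (invKern α β x ((0 : ℝ) + ω * Complex.I)).re : ℝ) : ℂ) := by
  have hint := integrable_invKern (x := x) hα hβ le_rfl
  rw [← integral_Iic_add_Ioi hint.integrableOn hint.integrableOn (b := 0), ← neg_zero,
    ← integral_comp_neg_Ioi, neg_zero, ← MeasureTheory.integral_add hint.comp_neg.integrableOn hint.integrableOn,
    ← integral_complex_ofReal]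
  refine setIntegral_congr_fun measurableSet_Ioi fun ω hω => ?_
  rw [invKern_conj (ne_of_gt hω), add_comm, Complex.add_conj]

lemma image_tan_Ioo_zero : Real.tan '' Set.Ioo 0 (Real.pi / 2) = Set.Ioi 0 := by
  ext t
  constructor
  · rintro ⟨v, hv, rfl⟩
    exact Real.tan_pos_of_pos_of_lt_pi_div_two hv.1 hv.2
  · intro ht
    exact ⟨Real.arctan t, ⟨Real.arctan_pos.2 ht, Real.arctan_lt_pi_div_two t⟩, Real.tan_arctan t⟩

/-- ∫₀^{π/2} sin^{α−1}v·cos^{β−1}v·sin(x·tan v − (α+β)v + απ/2) dv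
      = (π·x^β/Γ(β+1))·φ(α+β,1+β,−x). -/
theorem kummer_sine_integral_phi' (α β x : ℝ) (hx : 0 < x) (hα : 0 < α) (hβ : 0 < β) :
    ∫ v in (0 : ℝ)..(Real.pi / 2),
        Real.sin v ^ (α - 1) * Real.cos v ^ (β - 1)
          * Real.sin (x * Real.tan v - (α + β) * v + α * Real.pi / 2)
      = Real.pi * x ^ β / Real.Gamma (β + 1) * kummerPhi (α + β) (1 + β) (-x) := by
  have hpi := Real.pi_pos
  have hsub : Set.Ioo 0 (Real.pi / 2) ⊆ Set.Ioo (-(Real.pi / 2)) (Real.pi / 2) :=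
    Set.Ioo_subset_Ioo_left (by linarith)
  have hmain := integral_invKern_axis hα hβ hx one_le_two
  rw [integral_invKern_two hβ hx, integral_invKern_fold hα hβ, Complex.ofReal_inj,
    ← image_tan_Ioo_zero, integral_image_eq_integral_abs_deriv_smul measurableSet_Ioo
      (fun v hv => (Real.hasDerivAt_tan_of_mem_Ioo (hsub hv)).hasDerivWithinAt)
      (Real.injOn_tan.mono hsub)] at hmain
  rw [integral_of_le (by positivity), integral_Ioc_eq_integral_Ioo]
  have hcongr : ∫ v in Set.Ioo 0 (Real.pi / 2), |1 / Real.cos v ^ 2| •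
        (2 * (invKern α β x ((0 : ℝ) + Real.tan v * Complex.I)).re)
      = ∫ v in Set.Ioo 0 (Real.pi / 2), 2 * (Real.sin v ^ (α - 1) * Real.cos v ^ (β - 1)
          * Real.sin (x * Real.tan v - (α + β) * v + α * Real.pi / 2)) := by
    refine setIntegral_congr_fun measurableSet_Ioo fun v hv => ?_
    have hc : 0 < Real.cos v := Real.cos_pos_of_mem_Ioo (hsub hv)
    rw [invKern_tan hv, Complex.re_ofReal_mul, Complex.exp_ofReal_mul_I_re,
      Real.cos_sub_pi_div_two, abs_of_pos (by positivity), smul_eq_mul,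
      show β + 1 = (β - 1) + (2 : ℕ) by push_cast; ring, Real.rpow_add_natCast hc.ne']
    field_simp
  rw [hcongr, MeasureTheory.integral_const_mul] at hmain
  linear_combination hmain / 2
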